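/- arXiv:2304.05584 — 4 statements merged into one kernel-verified Lean document; each statement's English description precedes it below -/
import Mathlib

section
/- (Chen–Yu) For every integer i ≥ 2, the length of the longest path between the outer vertices x and y in the Moon–Moser graph T_i is exactly 3·2^{i-1}; in particular, every path in T_i from x to y has length at most 3·2^{i-1}, and some x–y path attains this length. -/
/-- A state in the recursive construction of the Moon–Moser graphs `T_i`:
`faces` is the list of inner triangular faces (each a triple of vertices),
`next` is the label of the next vertex to be added (so the vertices used so far
are `0, 1, ..., next - 1`), and `edges` is the set of edges built so far. -/
structure MMState where
  faces : List (ℕ × ℕ × ℕ)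
  next : ℕ
  edges : Finset (Sym2 ℕ)

/-- The initial state: `T_1 = K_4` on vertices `0, 1, 2, 3`, with outer triangle
`x = 0`, `y = 1`, `z = 2`; its inner faces are the three triangles containing `3`. -/
def MMinit : MMState where
  faces := [(0, 1, 3), (0, 2, 3), (1, 2, 3)]
  next := 4
  edges := {s(0, 1), s(0, 2), s(0, 3), s(1, 2), s(1, 3), s(2, 3)}

/-- One step of the Moon–Moser construction: into each inner triangular face insert a
new vertex joined to the three vertices of that face; each face is replaced by three
new inner faces. -/
def MMstep (st : MMState) : MMState where
  faces := ((st.faces.zipIdx.map Prod.swap).map (fun p =>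
    let v := st.next + p.1
    [(p.2.1, p.2.2.1, v), (p.2.1, p.2.2.2, v), (p.2.2.1, p.2.2.2, v)])).flatten
  next := st.next + st.faces.length
  edges := st.edges ∪ (((st.faces.zipIdx.map Prod.swap).map (fun p =>
    let v := st.next + p.1
    [s(p.2.1, v), s(p.2.2.1, v), s(p.2.2.2, v)])).flatten).toFinset

/-- The state after constructing `T_i` (for `i ≥ 1`). -/
def MMstate (i : ℕ) : MMState := MMstep^[i - 1] MMinit

/-- The number of vertices of the Moon–Moser graph `T_i` (its vertices being
`0, 1, ..., MMvertexCount i - 1`). -/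
def MMvertexCount (i : ℕ) : ℕ := (MMstate i).next

/-- The Moon–Moser graph `T_i` (as a simple graph on `ℕ`); its outer triangle is
`x = 0`, `y = 1`, `z = 2`. -/
def MoonMoser (i : ℕ) : SimpleGraph ℕ :=
  SimpleGraph.fromEdgeSet ((MMstate i).edges : Set (Sym2 ℕ))

/-! Each round of insertions exactly doubles the length of the longest path.

The new vertices of a round are pairwise non-adjacent, and all neighbours of a new vertex lie in
its host triangle. Hence a path between old vertices can be shortcut past its new vertices into a
path of the old graph of at least half the length.

Conversely, if the edges of a path lie in distinct inner faces, one for each edge, then routing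
every edge through the new vertex of its face doubles the path, and the two halves `u w`, `w v` of
an edge lie in the new faces where `w` replaces `v`, respectively `u`; these are again distinct, so
the process can be iterated. In `K₄` the Hamiltonian path `0 2 3 1` of length `3` starts it. -/

section Stacking

variable {V : Type*}

theorem forall_mem_support_of_forall_adj {G : SimpleGraph V} {P : V → Prop}
    (hP : ∀ a b, G.Adj a b → P b) {u v : V} (hu : P u) (p : G.Walk u v) : ∀ x ∈ p.support, P x := by
  induction p with
  | nil => simpa using hu
  | cons huv p ih => exact List.forall_mem_cons.2 ⟨hu, ih (hP _ _ huv)⟩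

theorem length_lt_card_of_support_subset {G : SimpleGraph V} {u v : V} {p : G.Walk u v}
    (hp : p.IsPath) {s : Finset V} (hs : ∀ x ∈ p.support, x ∈ s) : p.length < s.card := by
  classical
  calc p.length < p.support.length := by simp
    _ = p.support.toFinset.card := (List.toFinset_card_of_nodup hp.support_nodup).symm
    _ ≤ s.card := Finset.card_le_card fun x hx => hs x (List.mem_toFinset.1 hx)

/-- The graph obtained from `G` by joining each new vertex `w ∈ W` to its host face `φ w`. -/
def stackGraph (G : SimpleGraph V) (W : Set V) (φ : V → Finset V) : SimpleGraph V :=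
  G ⊔ SimpleGraph.fromRel fun a w => w ∈ W ∧ a ∈ φ w

/-- The inner faces, as vertex sets, created by inserting each `w ∈ W` into its host face `φ w`:
in each of them `w` replaces one vertex of `φ w`. -/
def stackFaces [DecidableEq V] (W : Set V) (φ : V → Finset V) : Set (Finset V) :=
  {t | ∃ w ∈ W, ∃ z ∈ φ w, t = insert w ((φ w).erase z)}

/-- The set `W` is disjoint from `G` and can be stacked onto it with host faces `φ w`, which are
cliques of old vertices. Isolated vertices of `G` are not tracked: the old vertices are those
outside `W`. -/
structure IsStackable (G : SimpleGraph V) (W : Set V) (φ : V → Finset V) : Prop where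
  notMem_of_adj {a b : V} : G.Adj a b → b ∉ W
  notMem_of_mem_host {a w : V} : w ∈ W → a ∈ φ w → a ∉ W
  isClique_host {w : V} : w ∈ W → G.IsClique (φ w)

/-- The faces `ts`, one for each edge of `p` and containing it, are pairwise distinct. -/
structure IsFaceTransversal {G : SimpleGraph V} {u v : V} (p : G.Walk u v)
    (ts : List (Finset V)) : Prop where
  nodup : ts.Nodup
  forall₂_mem : List.Forall₂ (fun e t => e ∈ t.sym2) p.edges ts

/-- There is a path of length `n` from `u` to `v` whose edges have a system of distinct
representatives among the faces `F`. -/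
def HasTransversalPath (G : SimpleGraph V) (F : Set (Finset V)) (u v : V) (n : ℕ) : Prop :=
  ∃ p : G.Walk u v, p.IsPath ∧ p.length = n ∧
    ∃ ts : List (Finset V), (∀ t ∈ ts, t ∈ F) ∧ IsFaceTransversal p ts

variable {G : SimpleGraph V} {W : Set V} {φ : V → Finset V} {u v w : V}

theorem adj_of_stackGraph_adj (hu : u ∉ W) (hv : v ∉ W) (huv : (stackGraph G W φ).Adj u v) :
    G.Adj u v := by
  rcases huv with huv | ⟨-, ⟨hv', -⟩ | ⟨hu', -⟩⟩
  exacts [huv, absurd hv' hv, absurd hu' hu]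

theorem notMem_of_mem_stackFaces [DecidableEq V] {t : Finset V} (ht : t ∈ stackFaces W φ)
    (hw : w ∉ W) (hφ : ∀ w' ∈ W, w ∉ φ w') : w ∉ t := by
  obtain ⟨w', hw', z, -, rfl⟩ := ht
  rw [Finset.mem_insert, Finset.mem_erase]
  rintro (rfl | ⟨-, h⟩)
  exacts [hw hw', hφ w' hw' h]

theorem stackFaces_mono [DecidableEq V] {W' : Set V} (h : W' ⊆ W) :
    stackFaces W' φ ⊆ stackFaces W φ :=
  fun _ ⟨w, hw, ht⟩ => ⟨w, h hw, ht⟩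

namespace IsStackable

theorem adj_of_mem_host (h : IsStackable G W φ) (hw : w ∈ W) (hu : u ∈ φ w) :
    (stackGraph G W φ).Adj u w := by
  have huw : u ≠ w := by rintro rfl; exact h.notMem_of_mem_host hw hu hw
  exact .inr ⟨huw, .inl ⟨hw, hu⟩⟩

theorem mem_host_of_adj (h : IsStackable G W φ) (hw : w ∈ W)
    (huw : (stackGraph G W φ).Adj u w) : u ∈ φ w := by
  rcases huw with huw | ⟨-, ⟨-, hu⟩ | ⟨hu, hwu⟩⟩
  · exact absurd hw (h.notMem_of_adj huw)
  · exact hu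
  · exact absurd hw (h.notMem_of_mem_host hu hwu)

/-- A new vertex on a path has both its neighbours in its host face, so it can be bypassed by an
edge of `G`. -/
theorem exists_isPath_length_le_two_mul (h : IsStackable G W φ) (hu : u ∉ W) (hv : v ∉ W)
    (p : (stackGraph G W φ).Walk u v) (hp : p.IsPath) :
    ∃ q : G.Walk u v, q.IsPath ∧ q.support ⊆ p.support ∧ p.length ≤ 2 * q.length := by
  induction hn : p.length using Nat.strong_induction_on generalizing u with | _ n ih
  subst hn
  cases p with
  | nil => exact ⟨.nil, .nil, List.Subset.refl _, le_rfl⟩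
  | @cons _ w _ huw p =>
    rw [SimpleGraph.Walk.cons_isPath_iff] at hp
    by_cases hw : w ∈ W
    · cases p with
      | nil => exact absurd hw hv
      | @cons _ x _ hwx p =>
        rw [SimpleGraph.Walk.cons_isPath_iff, SimpleGraph.Walk.support_cons,
          List.mem_cons, not_or] at hp
        have hxφ : x ∈ φ w := h.mem_host_of_adj hw hwx.symm
        have hux : u ≠ x := by rintro rfl; exact hp.2.2 p.start_mem_support
        have hadj : G.Adj u x := h.isClique_host hw (h.mem_host_of_adj hw huw) hxφ hux
        obtain ⟨q, hq, hqp, hlen⟩ :=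
          ih p.length (by simp) (h.notMem_of_mem_host hw hxφ) p hp.1.1 rfl
        refine ⟨.cons hadj q, hq.cons fun hu' => hp.2.2 (hqp hu'),
          List.cons_subset_cons u (List.subset_cons_of_subset w hqp), ?_⟩
        simp only [SimpleGraph.Walk.length_cons]
        lia
    · obtain ⟨q, hq, hqp, hlen⟩ := ih p.length (by simp) hw p hp.1 rfl
      refine ⟨.cons (adj_of_stackGraph_adj hu hw huw) q, hq.cons fun hu' => hp.2 (hqp hu'),
        List.cons_subset_cons u hqp, ?_⟩
      simp only [SimpleGraph.Walk.length_cons]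
      lia

variable [DecidableEq V]

theorem isNClique_of_mem_stackFaces (h : IsStackable G W φ) {n : ℕ}
    (hφ : ∀ w ∈ W, (φ w).card = n) {t : Finset V} (ht : t ∈ stackFaces W φ) :
    (stackGraph G W φ).IsNClique n t := by
  obtain ⟨w, hw, z, hz, rfl⟩ := ht
  have hclique : (stackGraph G W φ).IsNClique n (φ w) :=
    ⟨(h.isClique_host hw).mono le_sup_left, hφ w hw⟩
  exact hclique.insert_erase
    (fun a ha => (h.adj_of_mem_host hw (Finset.mem_sdiff.1 ha).1).symm) hz

/-- The edge `uv` is replaced by `u w v`, and the faces in which `w` replaces `v`, respectively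
`u`, are assigned to the two halves. -/
theorem exists_walk_subdivide (h : IsStackable G W φ) (p : G.Walk u v) {ws : List V}
    (hws : ∀ w ∈ ws, w ∈ W) (hnodup : ws.Nodup)
    (hφ : List.Forall₂ (fun e w => e ∈ (φ w).sym2) p.edges ws) :
    ∃ q : (stackGraph G W φ).Walk u v, q.length = 2 * p.length ∧
      q.support.Perm (p.support ++ ws) ∧
      ∃ ts : List (Finset V), (∀ t ∈ ts, t ∈ stackFaces {w | w ∈ ws} φ) ∧
        IsFaceTransversal q ts := by
  induction p generalizing ws with
  | nil =>
    obtain rfl := List.forall₂_nil_left_iff.1 hφ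
    exact ⟨.nil, rfl, .refl _, [], by simp, List.nodup_nil, .nil⟩
  | @cons u v x huv p ih =>
    rw [SimpleGraph.Walk.edges_cons, List.forall₂_cons_left_iff] at hφ
    obtain ⟨w, ws, huvw, hφ, rfl⟩ := hφ
    rw [List.forall_mem_cons] at hws
    rw [List.nodup_cons] at hnodup
    obtain ⟨hu, hv⟩ := Finset.mk_mem_sym2_iff.1 huvw
    obtain ⟨q, hlen, hperm, ts, hts, hnodup_ts, hedges⟩ := ih hws.2 hnodup.2 hφ
    have hnew (t : Finset V) (hw : w ∈ t) : t ∉ ts := fun ht =>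
      notMem_of_mem_stackFaces (hts t ht) hnodup.1
        (fun w' hw' hww' => h.notMem_of_mem_host (hws.2 w' hw') hww' hws.1) hw
    have hne_u : u ≠ w := (h.adj_of_mem_host hws.1 hu).ne
    refine ⟨.cons (h.adj_of_mem_host hws.1 hu) (.cons (h.adj_of_mem_host hws.1 hv).symm q), ?_, ?_,
      insert w ((φ w).erase v) :: insert w ((φ w).erase u) :: ts, ?_, ?_, ?_⟩
    · simp only [SimpleGraph.Walk.length_cons]; lia
    · exact ((hperm.cons w).trans List.perm_middle.symm).cons u
    · simp only [List.forall_mem_cons]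
      exact ⟨⟨w, List.mem_cons_self, v, hv, rfl⟩, ⟨w, List.mem_cons_self, u, hu, rfl⟩,
        fun t ht => stackFaces_mono (fun _ => List.mem_cons_of_mem w) (hts t ht)⟩
    · have hne : insert w ((φ w).erase v) ≠ insert w ((φ w).erase u) := fun heq => by
        have hu' : u ∈ insert w ((φ w).erase v) := by simp [hu, huv.ne]
        simp [heq, hne_u] at hu'
      simp [hne, hnew, hnodup_ts]
    · refine .cons ?_ (.cons ?_ hedges) <;> simp [hu, hv, huv.ne, huv.ne']

theorem hasTransversalPath_two_mul (h : IsStackable G W φ) (hu : u ∉ W) {n : ℕ}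
    (hp : HasTransversalPath G (φ '' W) u v n) :
    HasTransversalPath (stackGraph G W φ) (stackFaces W φ) u v (2 * n) := by
  obtain ⟨p, hp, rfl, ts, hts, hnodup, hedges⟩ := hp
  have : Nonempty V := ⟨u⟩
  choose! apex hapex hφ using hts
  have hmap : (ts.map apex).map φ = ts := by
    rw [List.map_map]
    exact (List.map_congr_left hφ).trans ts.map_id
  have hapex_mem : ∀ w ∈ ts.map apex, w ∈ W := List.forall_mem_map.2 hapex
  have hnodup_apex : (ts.map apex).Nodup := .of_map φ (hmap.symm ▸ hnodup)
  have hedges_apex : List.Forall₂ (fun e w => e ∈ (φ w).sym2) p.edges (ts.map apex) := by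
    rw [← hmap, List.forall₂_map_right_iff] at hedges
    exact hedges
  obtain ⟨q, hlen, hperm, ts', hts', htransversal⟩ :=
    h.exists_walk_subdivide p hapex_mem hnodup_apex hedges_apex
  refine ⟨q, .mk' (hperm.nodup_iff.2 ?_), hlen, ts',
    fun t ht => stackFaces_mono hapex_mem (hts' t ht), htransversal⟩
  exact hp.support_nodup.append hnodup_apex
    fun x hx hx' => forall_mem_support_of_forall_adj (P := (· ∉ W))
      (fun _ _ => h.notMem_of_adj) hu p x hx (hapex_mem x hx')

end IsStackable

end Stacking

/-- The vertex set of a face given as a triple. -/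
def faceVertices (f : ℕ × ℕ × ℕ) : Finset ℕ := {f.1, f.2.1, f.2.2}

namespace MMState

/-- The graph built so far, so that `MoonMoser i = (MMstate i).graph`. -/
def graph (st : MMState) : SimpleGraph ℕ := SimpleGraph.fromEdgeSet (st.edges : Set (Sym2 ℕ))

/-- The inner faces of the state, as vertex sets. -/
def innerFaces (st : MMState) : Set (Finset ℕ) := {t | ∃ f ∈ st.faces, faceVertices f = t}

/-- The vertices inserted by the next step. -/
def newVertices (st : MMState) : Set ℕ := Set.Ico st.next (st.next + st.faces.length)

/-- The face into which the next step inserts `w`; only meaningful for `w ∈ st.newVertices`. -/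
def hostFace (st : MMState) (w : ℕ) : Finset ℕ :=
  faceVertices (st.faces.getD (w - st.next) default)

/-- The state invariant of the construction: the graph only uses the labels below `next`, and the
inner faces are triangles. -/
structure WellFormed (st : MMState) : Prop where
  lt_next_of_adj {a b : ℕ} : st.graph.Adj a b → b < st.next
  isNClique_of_mem_innerFaces {t : Finset ℕ} : t ∈ st.innerFaces → st.graph.IsNClique 3 t

theorem exists_mem_newVertices_iff {st : MMState} {P : ℕ → Finset ℕ → Prop} :
    (∃ w ∈ st.newVertices, P w (st.hostFace w)) ↔
      ∃ f k, st.faces[k]? = some f ∧ P (st.next + k) (faceVertices f) := by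
  constructor
  · rintro ⟨w, ⟨hle, hlt⟩, hP⟩
    have hk : w - st.next < st.faces.length := by lia
    rw [hostFace, List.getD_eq_getElem _ _ hk] at hP
    exact ⟨_, w - st.next, List.getElem?_eq_getElem hk, by rwa [Nat.add_sub_cancel' hle]⟩
  · rintro ⟨f, k, hf, hP⟩
    obtain ⟨hk, rfl⟩ := List.getElem?_eq_some_iff.1 hf
    refine ⟨st.next + k, ⟨by lia, by lia⟩, ?_⟩
    rwa [hostFace, Nat.add_sub_cancel_left, List.getD_eq_getElem _ _ hk]

theorem image_hostFace_newVertices (st : MMState) :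
    st.hostFace '' st.newVertices = st.innerFaces := by
  ext t
  refine (exists_mem_newVertices_iff (P := fun _ s => s = t)).trans ⟨?_, ?_⟩
  · rintro ⟨f, k, hf, ht⟩
    exact ⟨f, List.mem_of_getElem? hf, ht⟩
  · rintro ⟨f, hf, ht⟩
    obtain ⟨k, hk⟩ := List.mem_iff_getElem?.1 hf
    exact ⟨f, k, hk, ht⟩

theorem hostFace_mem_innerFaces {st : MMState} {w : ℕ} (hw : w ∈ st.newVertices) :
    st.hostFace w ∈ st.innerFaces :=
  st.image_hostFace_newVertices ▸ Set.mem_image_of_mem _ hw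

theorem mem_edges_MMstep {st : MMState} {e : Sym2 ℕ} :
    e ∈ (MMstep st).edges ↔
      e ∈ st.edges ∨ ∃ w ∈ st.newVertices, ∃ a ∈ st.hostFace w, e = s(a, w) := by
  rw [exists_mem_newVertices_iff (P := fun w t => ∃ a ∈ t, e = s(a, w))]
  simp [MMstep, faceVertices, List.mk_mem_zipIdx_iff_getElem?]

theorem mem_faces_MMstep {st : MMState} {g : ℕ × ℕ × ℕ} :
    g ∈ (MMstep st).faces ↔ ∃ a b c k, st.faces[k]? = some (a, b, c) ∧
      g ∈ [(a, b, st.next + k), (a, c, st.next + k), (b, c, st.next + k)] := by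
  simp [MMstep, List.mk_mem_zipIdx_iff_getElem?]

theorem exists_faceVertices_eq_iff {a b c w : ℕ} {t : Finset ℕ}
    (hcard : (faceVertices (a, b, c)).card = 3) :
    (∃ g ∈ [(a, b, w), (a, c, w), (b, c, w)], faceVertices g = t) ↔
      ∃ z ∈ faceVertices (a, b, c), t = insert w ((faceVertices (a, b, c)).erase z) := by
  obtain ⟨hab, hac, hbc⟩ := Finset.card_triple_eq_three_iff.1 hcard
  have ha : faceVertices (b, c, w) = insert w ((faceVertices (a, b, c)).erase a) := by
    grind [faceVertices]
  have hb : faceVertices (a, c, w) = insert w ((faceVertices (a, b, c)).erase b) := by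
    grind [faceVertices]
  have hc : faceVertices (a, b, w) = insert w ((faceVertices (a, b, c)).erase c) := by
    grind [faceVertices]
  simp only [List.mem_cons, List.not_mem_nil, or_false, exists_eq_or_imp, exists_eq_left, ha, hb,
    hc]
  simp only [faceVertices, Finset.mem_insert, Finset.mem_singleton, exists_eq_or_imp,
    exists_eq_left]
  tauto

theorem graph_MMstep (st : MMState) :
    (MMstep st).graph = stackGraph st.graph st.newVertices st.hostFace := by
  ext a b
  simp only [graph, stackGraph, SimpleGraph.fromEdgeSet_adj, SimpleGraph.sup_adj,
    SimpleGraph.fromRel_adj, Finset.mem_coe, mem_edges_MMstep, Sym2.eq_iff]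
  grind

namespace WellFormed

variable {st : MMState}

theorem lt_next_of_mem_innerFaces (h : WellFormed st) {t : Finset ℕ} (ht : t ∈ st.innerFaces)
    {a : ℕ} (ha : a ∈ t) : a < st.next := by
  have hclique := h.isNClique_of_mem_innerFaces ht
  obtain ⟨b, hb, hba⟩ := Finset.exists_mem_ne (by rw [hclique.card_eq]; norm_num) a
  exact h.lt_next_of_adj (hclique.isClique hb ha hba)

theorem length_lt_next (h : WellFormed st) {u v : ℕ} (hu : u < st.next) {p : st.graph.Walk u v}
    (hp : p.IsPath) : p.length < st.next := by
  have hsupport : ∀ x ∈ p.support, x < st.next :=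
    forall_mem_support_of_forall_adj (fun _ _ => h.lt_next_of_adj) hu p
  simpa using length_lt_card_of_support_subset hp (s := Finset.range st.next)
    fun x hx => Finset.mem_range.2 (hsupport x hx)

theorem innerFaces_MMstep (h : WellFormed st) :
    (MMstep st).innerFaces = stackFaces st.newVertices st.hostFace := by
  ext t
  have hsplit {k a b c : ℕ} (hf : st.faces[k]? = some (a, b, c)) :=
    exists_faceVertices_eq_iff (w := st.next + k) (t := t)
      (h.isNClique_of_mem_innerFaces ⟨_, List.mem_of_getElem? hf, rfl⟩).card_eq
  calc t ∈ (MMstep st).innerFaces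
      ↔ ∃ f k, st.faces[k]? = some f ∧
          ∃ z ∈ faceVertices f, t = insert (st.next + k) ((faceVertices f).erase z) := by
        simp only [innerFaces, Set.mem_ofPred_eq, mem_faces_MMstep]
        grind
    _ ↔ t ∈ stackFaces st.newVertices st.hostFace :=
        (exists_mem_newVertices_iff (P := fun w s => ∃ z ∈ s, t = insert w (s.erase z))).symm

theorem isStackable (h : WellFormed st) :
    IsStackable st.graph st.newVertices st.hostFace where
  notMem_of_adj hab hb := (h.lt_next_of_adj hab).not_ge hb.1
  notMem_of_mem_host hw ha ha' :=
    (h.lt_next_of_mem_innerFaces (hostFace_mem_innerFaces hw) ha).not_ge ha'.1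
  isClique_host hw := (h.isNClique_of_mem_innerFaces (hostFace_mem_innerFaces hw)).isClique

theorem step (h : WellFormed st) : WellFormed (MMstep st) where
  lt_next_of_adj {a b} hab := by
    have hnext : (MMstep st).next = st.next + st.faces.length := rfl
    rw [graph_MMstep] at hab
    by_cases hb : b ∈ st.newVertices
    · exact hb.2
    by_cases ha : a ∈ st.newVertices
    · have := h.lt_next_of_mem_innerFaces (hostFace_mem_innerFaces ha)
        (h.isStackable.mem_host_of_adj ha hab.symm)
      lia
    · have := h.lt_next_of_adj (adj_of_stackGraph_adj ha hb hab)
      lia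
  isNClique_of_mem_innerFaces ht := by
    rw [graph_MMstep]
    rw [h.innerFaces_MMstep] at ht
    exact h.isStackable.isNClique_of_mem_stackFaces
      (fun w hw => (h.isNClique_of_mem_innerFaces (hostFace_mem_innerFaces hw)).card_eq) ht

theorem length_le_iterate (h : WellFormed st) {u v m : ℕ} (hu : u < st.next) (hv : v < st.next)
    (hm : ∀ p : st.graph.Walk u v, p.IsPath → p.length ≤ m) (n : ℕ)
    (p : (MMstep^[n] st).graph.Walk u v) (hp : p.IsPath) : p.length ≤ m * 2 ^ n := by
  induction n generalizing st m with
  | zero => simpa using hm p hp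
  | succ n ih =>
    have hstep : ∀ p : (MMstep st).graph.Walk u v, p.IsPath → p.length ≤ 2 * m := by
      rw [graph_MMstep]
      intro p hp
      obtain ⟨q, hq, -, hlen⟩ := h.isStackable.exists_isPath_length_le_two_mul
        (fun hu' => hu.not_ge hu'.1) (fun hv' => hv.not_ge hv'.1) p hp
      exact hlen.trans (Nat.mul_le_mul_left 2 (hm q hq))
    calc p.length ≤ 2 * m * 2 ^ n :=
          ih h.step (Nat.lt_add_right _ hu) (Nat.lt_add_right _ hv) hstep p hp
      _ = m * 2 ^ (n + 1) := by ring

theorem hasTransversalPath_iterate (h : WellFormed st) {u v m : ℕ} (hu : u < st.next)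
    (hp : HasTransversalPath st.graph st.innerFaces u v m) (n : ℕ) :
    HasTransversalPath (MMstep^[n] st).graph (MMstep^[n] st).innerFaces u v
      (m * 2 ^ n) := by
  induction n generalizing st m with
  | zero => simpa using hp
  | succ n ih =>
    have hstep : HasTransversalPath (MMstep st).graph (MMstep st).innerFaces u v
        (2 * m) := by
      rw [graph_MMstep, h.innerFaces_MMstep]
      rw [← image_hostFace_newVertices] at hp
      exact h.isStackable.hasTransversalPath_two_mul (fun hu' => hu.not_ge hu'.1) hp
    have hpow : m * 2 ^ (n + 1) = 2 * m * 2 ^ n := by ring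
    rw [hpow]
    exact ih h.step (Nat.lt_add_right _ hu) hstep

end WellFormed

theorem graph_MMinit_adj {a b : ℕ} : MMinit.graph.Adj a b ↔ a ≠ b ∧ a < 4 ∧ b < 4 := by
  simp only [graph, MMinit, SimpleGraph.fromEdgeSet_adj, Finset.mem_coe, Finset.mem_insert,
    Finset.mem_singleton, Sym2.eq_iff]
  constructor
  · omega
  · rintro ⟨hab, ha, hb⟩
    interval_cases a <;> interval_cases b <;> simp_all

theorem wellFormed_MMinit : WellFormed MMinit where
  lt_next_of_adj hab := (graph_MMinit_adj.1 hab).2.2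
  isNClique_of_mem_innerFaces := by
    rintro t ⟨f, hf, rfl⟩
    have hsub : (∀ x ∈ faceVertices f, x < 4) ∧ (faceVertices f).card = 3 := by
      revert f; decide
    exact ⟨fun a ha b hb hab => graph_MMinit_adj.2 ⟨hab, hsub.1 a ha, hsub.1 b hb⟩, hsub.2⟩

theorem hasTransversalPath_MMinit :
    HasTransversalPath MMinit.graph MMinit.innerFaces 0 1 3 := by
  refine ⟨.cons (v := 2) (graph_MMinit_adj.2 (by decide)) (.cons (v := 3)
    (graph_MMinit_adj.2 (by decide)) (graph_MMinit_adj.2 (by decide)).toWalk), ?_, rfl,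
    [{0, 2, 3}, {1, 2, 3}, {0, 1, 3}], ?_, ?_, ?_⟩
  · simp
  · simp [innerFaces, MMinit, faceVertices]
  · decide
  · simp

end MMState

/-- (Chen–Yu) For every integer `i ≥ 2`, the length of the longest path between the
outer vertices `x = 0` and `y = 1` in the Moon–Moser graph `T_i` is exactly `3·2^(i-1)`:
every `x`–`y` path in `T_i` has length at most `3·2^(i-1)`, and some `x`–`y` path
attains this length. -/
theorem moonMoser_longest_xy_path (i : ℕ) (hi : 2 ≤ i) :
    (∀ p : (MoonMoser i).Walk 0 1, p.IsPath → p.length ≤ 3 * 2 ^ (i - 1)) ∧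
    (∃ p : (MoonMoser i).Walk 0 1, p.IsPath ∧ p.length = 3 * 2 ^ (i - 1)) := by
  have hinit : MMinit.WellFormed := MMState.wellFormed_MMinit
  have hx : 0 < MMinit.next := by decide
  have hy : 1 < MMinit.next := by decide
  constructor
  · exact hinit.length_le_iterate hx hy (fun p hp => Nat.le_of_lt_succ (hinit.length_lt_next hx hp))
      (i - 1)
  · obtain ⟨p, hp, hlen, -⟩ :=
      hinit.hasTransversalPath_iterate hx MMState.hasTransversalPath_MMinit (i - 1)
    exact ⟨p, hp, hlen⟩
end

section
/- Let G be a simple graph, let x ≠ y be two vertices of G, and let V_1, …, V_s be subsets of the vertex set of G whose union is all of V(G), such that V_j ∩ V_l = {x, y} for all j ≠ l, and such that every edge of G has both endpoints in a common set V_j. Then for every cycle C of G there exist indices j and l such that all vertices of C lie in V_j ∪ V_l; that is, every cycle of G passes through at most two of the blocks V_1, …, V_s. -/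
/-!
Follow the cycle and record the block containing the current edge. Distinct blocks share only
separating vertices, so the block can change only when the walk passes through such a vertex.
Starting the cycle at a separating vertex, if it contains one, leaves at most `#S - 1` separating
vertices in its interior, hence at most `#S - 1` changes of block and at most `#S` blocks.
-/

section BlockFamily

open Finset

variable {α ι : Type*}

/-- A family of blocks of `G` separated by `S`: distinct blocks share only vertices of `S`, and
every edge lies in a block. It lets the two-vertex cut `{x, y}` be replaced by an arbitrary set.
Covering is asked of edges only, so an isolated vertex may lie in no block. -/
structure IsBlockFamily (G : SimpleGraph α) (S : Set α) (V : ι → Set α) : Prop where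
  inter_subset : Pairwise fun i j ↦ V i ∩ V j ⊆ S
  exists_of_adj : ∀ u v, G.Adj u v → ∃ i, u ∈ V i ∧ v ∈ V i

theorem countP_mem_lt_card [DecidableEq α] {l : List α} {S : Finset α} {a : α} (hl : l.Nodup)
    (haS : a ∈ S) (hal : a ∉ l) : l.countP (· ∈ S) < #S := by
  rw [← hl.card_eq_countP]
  refine card_lt_card <| (ssubset_iff_of_subset fun b hb ↦ (mem_filter.mp hb).2).mpr ⟨a, haS, ?_⟩
  exact fun ha ↦ hal (List.mem_toFinset.mp (mem_filter.mp ha).1)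

theorem exists_subset_pair_of_card_le_two [DecidableEq ι] {T : Finset ι} (hT : T.Nonempty)
    (hcard : #T ≤ 2) : ∃ i j, T ⊆ {i, j} := by
  obtain ⟨i, hi⟩ := hT
  have herase : #(T.erase i) ≤ 1 := by rw [card_erase_of_mem hi]; lia
  have : Nonempty ι := ⟨i⟩
  obtain ⟨j, hj⟩ := card_le_one_iff_subset_singleton.mp herase
  exact ⟨i, j, subset_insert_iff.mpr hj⟩

theorem end_notMem_dropLast_tail_support {G : SimpleGraph α} {u v : α} {p : G.Walk u v}
    (hp : p.support.tail.Nodup) : v ∉ p.support.tail.dropLast := by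
  cases p with
  | nil => exact List.not_mem_nil
  | cons h q =>
    rw [SimpleGraph.Walk.support_cons, List.tail_cons] at hp ⊢
    rw [← q.dropLast_support_concat] at hp
    exact fun hv ↦ (List.nodup_append.mp hp).2.2 v hv v (List.mem_singleton_self v) rfl

namespace IsBlockFamily

variable {G : SimpleGraph α} {V : ι → Set α}

theorem eq_of_mem {S : Set α} (hV : IsBlockFamily G S V) {i j : ι} {u : α} (hi : u ∈ V i)
    (hj : u ∈ V j) (hu : u ∉ S) : i = j := by
  by_contra hij
  exact hu (hV.inter_subset hij ⟨hi, hj⟩)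

theorem exists_finset_cover_walk {S : Set α} [DecidablePred (· ∈ S)] (hV : IsBlockFamily G S V)
    {u w : α} (p : G.Walk u w) {i : ι} (hi : u ∈ V i) :
    ∃ T : Finset ι, i ∈ T ∧ #T ≤ p.support.dropLast.countP (· ∈ S) + 1 ∧
      ∀ a ∈ p.support, ∃ j ∈ T, a ∈ V j := by
  classical
  induction p generalizing i with
  | nil => exact ⟨{i}, by simpa using hi⟩
  | @cons u v w h q ih =>
    obtain ⟨k, huk, hvk⟩ := hV.exists_of_adj u v h
    obtain ⟨T, hkT, hcard, hcover⟩ := ih hvk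
    rw [SimpleGraph.Walk.support_cons, List.dropLast_cons_of_ne_nil q.support_ne_nil]
    refine ⟨insert i T, mem_insert_self i T, ?_, ?_⟩
    · by_cases hu : u ∈ S
      · rw [List.countP_cons_of_pos (by simpa using hu)]
        exact (card_insert_le i T).trans (Nat.succ_le_succ hcard)
      · rw [List.countP_cons_of_neg (by simpa using hu), hV.eq_of_mem hi huk hu,
          insert_eq_of_mem hkT]
        exact hcard
    · exact List.forall_mem_cons.mpr ⟨⟨i, mem_insert_self i T, hi⟩,
        fun a ha ↦ (hcover a ha).imp fun j ⟨hj, haj⟩ ↦ ⟨mem_insert_of_mem hj, haj⟩⟩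

theorem exists_finset_cover_cycle_of_notMem_interior {S : Finset α} (hV : IsBlockFamily G S V)
    {v a : α} {c : G.Walk v v} (hc : c.IsCycle) (haS : a ∈ S)
    (hac : a ∉ c.support.tail.dropLast) :
    ∃ T : Finset ι, #T ≤ #S ∧ ∀ u ∈ c.support, ∃ j ∈ T, u ∈ V j := by
  classical
  obtain ⟨i, -, hi⟩ := hV.exists_of_adj v c.snd (c.adj_snd hc.not_nil)
  obtain ⟨T, -, hcard, hcover⟩ := hV.exists_finset_cover_walk c.tail hi
  rw [c.support_tail_of_not_nil hc.not_nil] at hcard hcover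
  refine ⟨T, hcard.trans ?_, fun u hu ↦ hcover u ?_⟩
  · exact countP_mem_lt_card (hc.support_nodup.sublist (List.dropLast_sublist _)) haS hac
  · rw [← c.cons_tail_support, List.mem_cons] at hu
    exact hu.elim (fun huv ↦ huv ▸ c.end_mem_tail_support hc.not_nil) id

theorem exists_finset_cover_cycle {S : Finset α} (hV : IsBlockFamily G S V) (hS : S.Nonempty)
    {v : α} {c : G.Walk v v} (hc : c.IsCycle) :
    ∃ T : Finset ι, #T ≤ #S ∧ ∀ u ∈ c.support, ∃ j ∈ T, u ∈ V j := by
  classical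
  obtain ⟨a, haS⟩ := hS
  by_cases hmeets : ∃ b ∈ S, b ∈ c.support
  · obtain ⟨b, hbS, hbc⟩ := hmeets
    have hrotate := hc.rotate hbc
    obtain ⟨T, hcard, hcover⟩ := hV.exists_finset_cover_cycle_of_notMem_interior hrotate hbS
      (end_notMem_dropLast_tail_support hrotate.support_nodup)
    exact ⟨T, hcard, fun u hu ↦ hcover u ((c.mem_support_rotate_iff b hbc).mpr hu)⟩
  · exact hV.exists_finset_cover_cycle_of_notMem_interior hc haS fun ha ↦
      hmeets ⟨a, haS, List.mem_of_mem_tail (List.mem_of_mem_dropLast ha)⟩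

end IsBlockFamily

theorem cycle_meets_at_most_two_blocks_general (G : SimpleGraph α) (x y : α) (V : ι → Set α)
    (hinter : ∀ j l, j ≠ l → V j ∩ V l ⊆ {x, y})
    (hedge : ∀ u v, G.Adj u v → ∃ j, u ∈ V j ∧ v ∈ V j) (v : α) (c : G.Walk v v)
    (hc : c.IsCycle) : ∃ j l, ∀ u ∈ c.support, u ∈ V j ∪ V l := by
  classical
  have hV : IsBlockFamily G (({x, y} : Finset α) : Set α) V :=
    ⟨fun j l hjl ↦ (hinter j l hjl).trans_eq coe_pair.symm, hedge⟩
  obtain ⟨T, hcard, hcover⟩ := hV.exists_finset_cover_cycle (insert_nonempty x {y}) hc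
  have hT : T.Nonempty := (hcover v c.start_mem_support).imp fun _ h ↦ h.1
  obtain ⟨j, l, hjl⟩ := exists_subset_pair_of_card_le_two hT (hcard.trans card_le_two)
  refine ⟨j, l, fun u hu ↦ ?_⟩
  obtain ⟨i, hiT, hui⟩ := hcover u hu
  obtain rfl | rfl := mem_insert.mp (hjl hiT) |>.imp_right mem_singleton.mp
  · exact Or.inl hui
  · exact Or.inr hui

end BlockFamily

/-- Let `G` be a finite simple graph, `x ≠ y` two vertices, and `V 1, …, V s` subsets
of the vertex set covering all of `V(G)`, pairwise intersecting exactly in `{x, y}`,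
such that every edge of `G` has both endpoints in a common `V j`. Then every cycle of
`G` has all of its vertices inside the union of (at most) two of the blocks. -/
theorem cycle_meets_at_most_two_blocks {α : Type*} [Fintype α] (G : SimpleGraph α)
    (x y : α) (hxy : x ≠ y) (s : ℕ) (V : Fin s → Set α)
    (hcover : (⋃ j, V j) = Set.univ)
    (hinter : ∀ j l, j ≠ l → V j ∩ V l = {x, y})
    (hedge : ∀ u v, G.Adj u v → ∃ j, u ∈ V j ∧ v ∈ V j) :
    ∀ (v : α) (c : G.Walk v v), c.IsCycle →
      ∃ j l, ∀ u ∈ c.support, u ∈ V j ∪ V l :=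
  cycle_meets_at_most_two_blocks_general G x y V (fun j l hjl ↦ (hinter j l hjl).subset) hedge
end

section
/- Let G be a simple graph, let x ≠ y be two vertices of G, and let V_1, …, V_s be subsets of V(G) whose union is V(G), with V_j ∩ V_l = {x, y} for all j ≠ l, and such that every edge of G has both endpoints in a common V_j. Let a and b be positive integers. If every cycle of the induced subgraph G[V_j] has length at most a for each j, and every path from x to y in G[V_j] has length at most b for each j, then every cycle of G has length at most max(a, 2b). In particular, if a < k and 2b < k, then G contains no cycle of length k. -/
/-!
Since two blocks share at most `x` and `y`, a walk can pass from one block to another only at `x` or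
`y`. Hence a cycle that meets `{x, y}` in at most one vertex, started at that vertex, stays inside a
single block. A cycle through distinct `x` and `y` is the union of two `x`–`y` paths, each of which
stays inside a single block because `x` and `y` are only its ends.
-/

section

open SimpleGraph

variable {α ι : Type*} {G : SimpleGraph α} {u v x y : α}

theorem length_le_of_isPath_of_support_subset {s : Set α} {b : ℕ}
    (hb : ∀ (hu : u ∈ s) (hv : v ∈ s) (q : (G.induce s).Walk ⟨u, hu⟩ ⟨v, hv⟩),
      q.IsPath → q.length ≤ b)
    {p : G.Walk u v} (hp : p.IsPath) (hs : ∀ w ∈ p.support, w ∈ s) : p.length ≤ b := by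
  rw [← p.map_induce hs] at hp ⊢
  exact (Walk.length_map _ _).trans_le (hb _ _ _ hp.of_map)

theorem length_le_of_isCycle_of_support_subset {s : Set α} {a : ℕ}
    (ha : ∀ (w : s) (d : (G.induce s).Walk w w), d.IsCycle → d.length ≤ a)
    {c : G.Walk v v} (hc : c.IsCycle) (hs : ∀ w ∈ c.support, w ∈ s) : c.length ≤ a := by
  rw [← c.map_induce hs] at hc ⊢
  exact (Walk.length_map _ _).trans_le (ha _ _ hc.of_map)

theorem ne_end_of_mem_dropLast_support_of_isPath {p : G.Walk u v} (hp : p.IsPath) {w : α}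
    (hw : w ∈ p.support.dropLast) : w ≠ v := by
  rintro rfl
  have hnodup := hp.support_nodup
  rw [← p.dropLast_support_concat] at hnodup
  exact List.disjoint_of_nodup_append hnodup hw (List.mem_singleton_self w)

theorem ne_start_and_ne_end_of_isPath {p : G.Walk u v} (hp : p.IsPath) {w : α}
    (hw : w ∈ p.support.tail.dropLast) : w ≠ u ∧ w ≠ v := by
  constructor
  · rintro rfl
    have hnodup := hp.support_nodup
    rw [← p.cons_tail_support] at hnodup
    exact hnodup.notMem (List.mem_of_mem_dropLast hw)
  · rw [← List.tail_dropLast] at hw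
    exact ne_end_of_mem_dropLast_support_of_isPath hp (List.mem_of_mem_tail hw)

theorem ne_base_of_isCycle {c : G.Walk v v} (hc : c.IsCycle) {w : α}
    (hw : w ∈ c.support.tail.dropLast) : w ≠ v := by
  rw [← c.support_tail_of_not_nil hc.not_nil] at hw
  exact ne_end_of_mem_dropLast_support_of_isPath hc.isPath_tail hw

theorem exists_isPath_isPath_length_add_eq_of_isCycle {c : G.Walk v v} (hc : c.IsCycle)
    (hx : x ∈ c.support) (hy : y ∈ c.support) (hxy : x ≠ y) :
    ∃ p q : G.Walk x y, p.IsPath ∧ q.IsPath ∧ p.length + q.length = c.length := by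
  classical
  let d := c.rotate x hx
  have hd : d.IsCycle := hc.rotate hx
  have hyd : y ∈ d.support := (c.mem_support_rotate_iff x hx).2 hy
  have hdrop : (d.dropUntil y hyd).IsPath :=
    Walk.IsCycle.isPath_of_append_right (p := d.takeUntil y hyd) (Walk.not_nil_of_ne hxy)
      ((d.take_spec hyd).symm ▸ hd)
  refine ⟨d.takeUntil y hyd, (d.dropUntil y hyd).reverse, hd.isPath_takeUntil hyd,
    hdrop.reverse, ?_⟩
  calc
    _ = d.length := by rw [Walk.length_reverse, ← Walk.length_append, d.take_spec hyd]
    _ = c.length := c.length_rotate x hx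

/-- A family `V` of vertex sets (the blocks) attached along a set `S`: every edge of `G` lies inside
some block, and distinct blocks share only vertices of `S`. Vertices of `S` need not belong to every
block, and isolated vertices need not belong to any. -/
structure IsBlockCover (G : SimpleGraph α) (S : Set α) (V : ι → Set α) : Prop where
  exists_mem_of_adj : ∀ ⦃u v⦄, G.Adj u v → ∃ j, u ∈ V j ∧ v ∈ V j
  inter_subset : ∀ ⦃i j⦄, i ≠ j → V i ∩ V j ⊆ S

namespace IsBlockCover

variable {S : Set α} {V : ι → Set α}

theorem mem_of_adj (hV : IsBlockCover G S V) {j : ι} (hu : u ∈ V j) (huS : u ∉ S)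
    (huv : G.Adj u v) : v ∈ V j := by
  obtain ⟨i, hui, hvi⟩ := hV.exists_mem_of_adj huv
  obtain rfl : i = j := by
    by_contra hij
    exact huS (hV.inter_subset hij ⟨hui, hu⟩)
  exact hvi

theorem support_subset (hV : IsBlockCover G S V) {j : ι} (p : G.Walk u v) (hu : u ∈ V j)
    (hS : ∀ w ∈ p.support.dropLast, w ∉ S) : ∀ w ∈ p.support, w ∈ V j := by
  induction p with
  | nil => simpa only [Walk.support_nil, List.forall_mem_singleton] using hu
  | cons huw q ih =>
    rw [Walk.support_cons, List.dropLast_cons_of_ne_nil q.support_ne_nil,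
      List.forall_mem_cons] at hS
    rw [Walk.support_cons, List.forall_mem_cons]
    exact ⟨hu, ih (hV.mem_of_adj hu hS.1 huw) hS.2⟩

theorem exists_support_subset (hV : IsBlockCover G S V) {p : G.Walk u v} (hp : ¬p.Nil)
    (hS : ∀ w ∈ p.support.tail.dropLast, w ∉ S) : ∃ j, ∀ w ∈ p.support, w ∈ V j := by
  cases p with
  | nil => exact absurd .nil hp
  | cons huw q =>
    obtain ⟨j, hu, hw⟩ := hV.exists_mem_of_adj huw
    exact ⟨j, List.forall_mem_cons.2 ⟨hu, hV.support_subset q hw hS⟩⟩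

theorem exists_support_subset_of_isPath (hV : IsBlockCover G {x, y} V) (hxy : x ≠ y)
    {p : G.Walk x y} (hp : p.IsPath) : ∃ j, ∀ w ∈ p.support, w ∈ V j := by
  refine hV.exists_support_subset (Walk.not_nil_of_ne hxy) fun w hw hwS => ?_
  obtain ⟨hwx, hwy⟩ := ne_start_and_ne_end_of_isPath hp hw
  exact hwS.elim hwx hwy

theorem exists_support_subset_of_isCycle (hV : IsBlockCover G S V) {c : G.Walk v v}
    (hc : c.IsCycle) (hS : {w ∈ S | w ∈ c.support}.Subsingleton) :
    ∃ j, ∀ w ∈ c.support, w ∈ V j := by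
  classical
  by_cases hmeet : ∃ s ∈ S, s ∈ c.support
  · obtain ⟨s, hsS, hs⟩ := hmeet
    have hd : (c.rotate s hs).IsCycle := hc.rotate hs
    have hinner : ∀ w ∈ (c.rotate s hs).support.tail.dropLast, w ∉ S := by
      intro w hw hwS
      have hwc : w ∈ c.support := (c.mem_support_rotate_iff s hs).1
        (List.mem_of_mem_tail (List.mem_of_mem_dropLast hw))
      exact ne_base_of_isCycle hd hw (hS ⟨hwS, hwc⟩ ⟨hsS, hs⟩)
    simpa only [Walk.mem_support_rotate_iff] using hV.exists_support_subset hd.not_nil hinner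
  · exact hV.exists_support_subset hc.not_nil fun w hw hwS =>
      hmeet ⟨w, hwS, List.mem_of_mem_tail (List.mem_of_mem_dropLast hw)⟩

end IsBlockCover

theorem cycle_length_le_of_blocks_general {V : ι → Set α} (hV : IsBlockCover G {x, y} V) {a b : ℕ}
    (hcyc : ∀ (j : ι) (v : V j) (c : (G.induce (V j)).Walk v v), c.IsCycle → c.length ≤ a)
    (hpath : ∀ (j : ι) (hx : x ∈ V j) (hy : y ∈ V j)
      (p : (G.induce (V j)).Walk ⟨x, hx⟩ ⟨y, hy⟩), p.IsPath → p.length ≤ b)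
    {c : G.Walk v v} (hc : c.IsCycle) : c.length ≤ max a (2 * b) := by
  by_cases hmeet : x ∈ c.support ∧ y ∈ c.support ∧ x ≠ y
  · obtain ⟨hx, hy, hxy⟩ := hmeet
    have hle {p : G.Walk x y} (hp : p.IsPath) : p.length ≤ b := by
      obtain ⟨j, hj⟩ := hV.exists_support_subset_of_isPath hxy hp
      exact length_le_of_isPath_of_support_subset (hpath j) hp hj
    obtain ⟨p, q, hp, hq, hpq⟩ := exists_isPath_isPath_length_add_eq_of_isCycle hc hx hy hxy
    have := hle hp
    have := hle hq
    omega
  · have hS : {w ∈ ({x, y} : Set α) | w ∈ c.support}.Subsingleton := by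
      rintro _ ⟨rfl | rfl, hw⟩ _ ⟨rfl | rfl, hw'⟩ <;> grind
    obtain ⟨j, hj⟩ := hV.exists_support_subset_of_isCycle hc hS
    exact le_max_of_le_left (length_le_of_isCycle_of_support_subset (hcyc j) hc hj)

end

/-- Let `G` be a finite simple graph, `x ≠ y` two vertices, and `V 1, …, V s` subsets
of the vertex set covering all of `V(G)`, pairwise intersecting exactly in `{x, y}`,
such that every edge of `G` has both endpoints in a common `V j`. Let `a, b` be positive
integers. If every cycle of each induced subgraph `G[V j]` has length at most `a`, and
every `x`–`y` path in each `G[V j]` has length at most `b`, then every cycle of `G` has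
length at most `max a (2b)`; in particular, if `a < k` and `2b < k`, then `G` contains
no cycle of length `k`. -/
theorem cycle_length_le_of_blocks {α : Type*} [Fintype α] (G : SimpleGraph α)
    (x y : α) (hxy : x ≠ y) (s : ℕ) (V : Fin s → Set α)
    (hcover : (⋃ j, V j) = Set.univ)
    (hinter : ∀ j l, j ≠ l → V j ∩ V l = {x, y})
    (hedge : ∀ u v, G.Adj u v → ∃ j, u ∈ V j ∧ v ∈ V j)
    (a b : ℕ) (ha : 0 < a) (hb : 0 < b)
    (hcyc : ∀ (j : Fin s) (v : V j) (c : (G.induce (V j)).Walk v v),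
      c.IsCycle → c.length ≤ a)
    (hpath : ∀ (j : Fin s) (hx : x ∈ V j) (hy : y ∈ V j)
      (p : (G.induce (V j)).Walk ⟨x, hx⟩ ⟨y, hy⟩), p.IsPath → p.length ≤ b) :
    (∀ (v : α) (c : G.Walk v v), c.IsCycle → c.length ≤ max a (2 * b)) ∧
    (∀ k : ℕ, a < k → 2 * b < k →
      ∀ (v : α) (c : G.Walk v v), c.IsCycle → c.length ≠ k) := by
  have hV : IsBlockCover G {x, y} V := ⟨hedge, fun i j hij => (hinter i j hij).subset⟩
  have hle (v : α) (c : G.Walk v v) (hc : c.IsCycle) : c.length ≤ max a (2 * b) :=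
    cycle_length_le_of_blocks_general hV hcyc hpath hc
  exact ⟨hle, fun k hak hbk v c hc => ((hle v c hc).trans_lt (max_lt hak hbk)).ne⟩
end

section
/- For every integer k ≥ 7 and every integer n with n ≥ (3^i + 5)/2, where i := ⌈log₂(k/3)⌉ − 1 and s := ⌈(n−2)/((3^i + 1)/2)⌉, we have 3n − 6 − (s − 1) ≥ 3n − 6 − 6·3^{log₂ 3}·n / k^{log₂ 3}; equivalently, s − 1 ≤ 6·3^{log₂ 3}·n / k^{log₂ 3}. -/
/-!
Since `(k/3)^(log₂ 3) = 3^(log₂ (k/3)) ≤ 3^(i + 1)`, a block accounts for more than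
`3^i / 2 ≥ (k/3)^(log₂ 3) / 6` vertices. As `s - 1` is less than `n` divided by this number, the
bound follows.
-/

lemma rpow_logb_comm (b : ℝ) {x y : ℝ} (hx : 0 < x) (hy : 0 < y) :
    x ^ Real.logb b y = y ^ Real.logb b x := by
  rw [Real.rpow_def_of_pos hx, Real.rpow_def_of_pos hy, Real.logb, Real.logb, mul_div_left_comm,
    mul_comm]

lemma rpow_logb_le_zpow_ceil_logb (b : ℝ) {a x : ℝ} (ha : 1 ≤ a) (hx : 0 < x) :
    x ^ Real.logb b a ≤ a ^ ⌈Real.logb b x⌉ := by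
  rw [rpow_logb_comm b hx (by positivity), ← Real.rpow_intCast]
  exact Real.rpow_le_rpow_of_exponent_le ha (Int.le_ceil _)

theorem block_count_bound_general {k n : ℝ} (hk : 0 < k) (hn : 0 ≤ n) :
    let i : ℤ := ⌈Real.logb 2 (k / 3)⌉ - 1
    let s : ℤ := ⌈(n - 2) / (((3 : ℝ) ^ i + 1) / 2)⌉
    (s : ℝ) - 1 < 6 * (3 : ℝ) ^ Real.logb 2 3 * n / k ^ Real.logb 2 3 := by
  intro i s
  have block_size : (k / 3) ^ Real.logb 2 3 / 6 ≤ (3 : ℝ) ^ i / 2 := by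
    have h : (k / 3) ^ Real.logb 2 3 ≤ (3 : ℝ) ^ (i + 1) := by
      simpa only [i, sub_add_cancel] using
        rpow_logb_le_zpow_ceil_logb 2 (by norm_num : (1 : ℝ) ≤ 3) (div_pos hk three_pos)
    rw [zpow_add_one₀ three_ne_zero] at h
    linarith
  calc
    (s : ℝ) - 1 < (n - 2) / (((3 : ℝ) ^ i + 1) / 2) :=
      sub_lt_iff_lt_add.mpr (Int.ceil_lt_add_one _)
    _ ≤ n / ((3 : ℝ) ^ i / 2) := by gcongr <;> linarith
    _ ≤ n / ((k / 3) ^ Real.logb 2 3 / 6) := by gcongr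
    _ = 6 * (3 : ℝ) ^ Real.logb 2 3 * n / k ^ Real.logb 2 3 := by
      rw [Real.div_rpow hk.le three_pos.le]
      field_simp

/-- For every integer `k ≥ 7` and every integer `n ≥ (3^i + 5)/2`, where
`i := ⌈log₂(k/3)⌉ - 1` and `s := ⌈(n-2)/((3^i + 1)/2)⌉`, we have
`3n - 6 - (s - 1) ≥ 3n - 6 - 6·3^(log₂ 3)·n / k^(log₂ 3)`; equivalently,
`s - 1 ≤ 6·3^(log₂ 3)·n / k^(log₂ 3)`. -/
theorem block_count_bound (k : ℕ) (hk : 7 ≤ k) (n : ℤ)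
    (hn : (((3 : ℝ) ^ (⌈Real.logb 2 ((k : ℝ) / 3)⌉ - 1) + 5) / 2) ≤ (n : ℝ)) :
    let i : ℤ := ⌈Real.logb 2 ((k : ℝ) / 3)⌉ - 1
    let s : ℤ := ⌈((n : ℝ) - 2) / (((3 : ℝ) ^ i + 1) / 2)⌉
    3 * (n : ℝ) - 6 - 6 * (3 : ℝ) ^ (Real.logb 2 3) * (n : ℝ) / (k : ℝ) ^ (Real.logb 2 3) ≤
      3 * (n : ℝ) - 6 - ((s : ℝ) - 1) ∧
    (s : ℝ) - 1 ≤ 6 * (3 : ℝ) ^ (Real.logb 2 3) * (n : ℝ) / (k : ℝ) ^ (Real.logb 2 3) := by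
  intro i s
  have h : (s : ℝ) - 1 ≤ 6 * (3 : ℝ) ^ Real.logb 2 3 * n / k ^ Real.logb 2 3 :=
    (block_count_bound_general (Nat.cast_pos.mpr (by lia)) (le_trans (by positivity) hn)).le
  exact ⟨sub_le_sub_left h _, h⟩
end
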